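/- Let $f(z) \in \mathbb{C}_v[z]$ be a monic polynomial of degree $d \geq 2$ over a complete algebraically closed non-archimedean field. Then the filled Julia set $\mathcal{K}_v = \{z \in \mathbb{C}_v : \{f^n(z)\}_{n\geq0} \text{ is bounded}\}$ has capacity $\gamma_v(\mathcal{K}_v) = 1$, i.e., $\log \gamma_v(\mathcal{K}_v) = 0$. -/

import Mathlib

open Finset Filter Polynomial

/-- The `n`-th normalized supremum of geometric means of pairwise distances of points of `E`,
whose limit defines the non-archimedean capacity (transfinite diameter) of `E`. -/
noncomputable def capSeq {Cv : Type*} [NormedField Cv] (E : Set Cv) (n : ℕ) : ℝ :=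
  sSup {x : ℝ | ∃ z : Fin n → Cv, (∀ i, z i ∈ E) ∧
    x = (∏ p ∈ Finset.univ.offDiag, ‖z p.1 - z p.2‖) ^ ((1 : ℝ) / (n * (n - 1) : ℕ))}

/-!
The product of the pairwise distances of `n` points is `|V|²` for their Vandermonde determinant
`V`, so the capacity of the filled Julia set `𝒦` is governed by the growth of `|V|` on `𝒦`.

Upper bound: the monomials in `V` may be replaced by any monic polynomials of degrees
`0, …, n - 1`. Taking `q_{dm+r} = (q_m ∘ f) Xʳ` with `r < d`, and using that `f` maps the bounded
set `𝒦` to itself, one gets sup norms on `𝒦` that grow only polynomially in the degree.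

Lower bound: every monic `q` has supremum at least `1` on `𝒦`, and then good points can be chosen
one at a time. Indeed, for `p` the `k`-th iterate of `f` and `c ∈ 𝒦`, the product of `q` over the
`dᵏ` points of `p⁻¹(c) ⊆ 𝒦` is up to sign the resultant of `p - c` and `q`, which is up to sign a
monic polynomial in `c` of degree `deg q`. By Lagrange interpolation its values on `deg q + 1`
fixed points of `𝒦` cannot all be small, uniformly in `k`, whereas they would be at most `η ^ dᵏ`
if `|q| ≤ η < 1` on `𝒦`.

This requires `𝒦` to be infinite. If it were finite, `f` would permute it, a fixed point `x` would
be its own only preimage, so that `f = (X - x)ᵈ + x`; but then `𝒦` contains a unit ball, which is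
infinite.
-/

open Bornology Matrix Topology
open scoped Nat

section Polynomial

theorem monic_iterate_comp_X {R : Type*} [CommSemiring R] [NoZeroDivisors R] [Nontrivial R]
    {f : R[X]} (hf : f.Monic) (hd : f.natDegree ≠ 0) (k : ℕ) : (f.comp^[k] X).Monic := by
  induction k with
  | zero => exact monic_X
  | succ k ih =>
    rw [Function.iterate_succ_apply']
    exact hf.comp ih (by simp [hd])

theorem mem_of_eval_iterate_comp_X_mem {R : Type*} [CommSemiring R] {f : R[X]} {E : Set R}
    (hE : ∀ z, f.eval z ∈ E → z ∈ E) (k : ℕ) {z : R} (hz : (f.comp^[k] X).eval z ∈ E) :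
    z ∈ E := by
  induction k with
  | zero => simpa using hz
  | succ k ih =>
    rw [Function.iterate_succ_apply', eval_comp] at hz
    exact ih (hE _ hz)

variable {F : Type*} [Field F] [IsAlgClosed F] {f : F[X]}

theorem exists_eval_eq_self (hd : 2 ≤ f.natDegree) : ∃ z, f.eval z = z := by
  have hdeg : (f - X).natDegree = f.natDegree :=
    natDegree_sub_eq_left_of_natDegree_lt (by rw [natDegree_X]; omega)
  obtain ⟨z, hz⟩ := IsAlgClosed.eval_surjective (p := f - X) (by omega) 0
  exact ⟨z, by simpa [sub_eq_zero] using hz⟩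

theorem injOn_eval_of_finite (hd : f.natDegree ≠ 0) {E : Set F} (hfin : E.Finite)
    (hE : ∀ z, f.eval z ∈ E ↔ z ∈ E) : Set.InjOn f.eval E := by
  have himage : f.eval '' E = E := by
    refine (Set.image_subset_iff.2 fun z hz => (hE z).2 hz).antisymm fun c hc => ?_
    obtain ⟨w, rfl⟩ := IsAlgClosed.eval_surjective hd c
    exact ⟨w, (hE w).1 hc, rfl⟩
  exact hfin.injOn_of_encard_image_eq (by rw [himage])

theorem eval_sub_eq_pow_of_finite (hd : f.natDegree ≠ 0) (hf : f.Monic) {E : Set F}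
    (hfin : E.Finite) (hE : ∀ z, f.eval z ∈ E ↔ z ∈ E) {x : F} (hx : x ∈ E) (hfix : f.eval x = x)
    (z : F) : f.eval z - x = (z - x) ^ f.natDegree := by
  have hmonic : (f - C x).Monic := hf.sub_of_left
    (degree_C_le.trans_lt (natDegree_pos_iff_degree_pos.1 (Nat.pos_of_ne_zero hd)))
  have hroots : (f - C x).roots = Multiset.replicate f.natDegree x := by
    refine Multiset.eq_replicate.2 ⟨?_, fun w hw => ?_⟩
    · rw [IsAlgClosed.card_roots_eq_natDegree, natDegree_sub_C]
    · have hwx : f.eval w = x := by simpa [sub_eq_zero] using isRoot_of_mem_roots hw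
      exact injOn_eval_of_finite hd hfin hE ((hE w).1 (hwx ▸ hx)) hx (hwx.trans hfix.symm)
  simpa [hroots] using (IsAlgClosed.splits (f - C x)).eval_eq_prod_roots_of_monic hmonic z

end Polynomial

section NormedField

variable {K : Type*} [NormedField K] {f : K[X]} {E : Set K}

theorem prod_offDiag_norm_sub {n : ℕ} (z : Fin n → K) :
    ∏ p ∈ univ.offDiag, ‖z p.1 - z p.2‖ = ‖(vandermonde z).det‖ ^ 2 := by
  calc ∏ p ∈ univ.offDiag, ‖z p.1 - z p.2‖
      = ∏ i, ∏ j ∈ {i}ᶜ, ‖z i - z j‖ :=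
        prod_finset_product _ _ _ fun p => by simp [eq_comm]
    _ = ∏ i, ∏ j ∈ Ioi i, ‖z i - z j‖ * ‖z j - z i‖ :=
        (prod_prod_Ioi_mul_eq_prod_prod_off_diag fun i j => ‖z j - z i‖).symm
    _ = ‖(vandermonde z).det‖ ^ 2 := by
        simp [det_vandermonde, norm_prod, norm_sub_rev (z _) (z _), ← sq, prod_pow]

theorem pow_sq_rpow_one_div {B : ℝ} (hB : 0 ≤ B) {n : ℕ} (hn : n ≠ 0) :
    ((B ^ n) ^ 2) ^ ((1 : ℝ) / (n * (n - 1) : ℕ)) = B ^ (2 / ((n : ℝ) - 1)) := by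
  rw [← pow_mul, ← Real.rpow_natCast, ← Real.rpow_mul hB]
  congr 1
  push_cast [Nat.cast_sub (Nat.one_le_iff_ne_zero.2 hn)]
  field_simp

theorem capSeq_le {B : ℝ} (hB : 0 ≤ B) {n : ℕ} (hn : n ≠ 0)
    (h : ∀ z : Fin n → K, (∀ i, z i ∈ E) → ‖(vandermonde z).det‖ ≤ B ^ n) :
    capSeq E n ≤ B ^ (2 / ((n : ℝ) - 1)) := by
  refine Real.sSup_le ?_ (Real.rpow_nonneg hB _)
  rintro _ ⟨z, hz, rfl⟩
  rw [prod_offDiag_norm_sub, ← pow_sq_rpow_one_div hB hn]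
  gcongr
  exact h z hz

theorem le_capSeq (hE : IsBounded E) {η : ℝ} (hη : 0 ≤ η) {n : ℕ} (hn : n ≠ 0)
    {z : Fin n → K} (hz : ∀ i, z i ∈ E) (h : η ^ n ≤ ‖(vandermonde z).det‖) :
    η ^ (2 / ((n : ℝ) - 1)) ≤ capSeq E n := by
  have hbdd : BddAbove {x : ℝ | ∃ z : Fin n → K, (∀ i, z i ∈ E) ∧
      x = (∏ p ∈ Finset.univ.offDiag, ‖z p.1 - z p.2‖) ^ ((1 : ℝ) / (n * (n - 1) : ℕ))} := by
    refine ⟨(∏ _p ∈ (univ : Finset (Fin n)).offDiag, Metric.diam E) ^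
      ((1 : ℝ) / (n * (n - 1) : ℕ)), ?_⟩
    rintro _ ⟨w, hw, rfl⟩
    gcongr with p
    rw [← dist_eq_norm]
    exact Metric.dist_le_diam_of_mem hE (hw p.1) (hw p.2)
  refine le_trans ?_ (le_csSup hbdd ⟨z, hz, rfl⟩)
  rw [prod_offDiag_norm_sub, ← pow_sq_rpow_one_div hη hn]
  gcongr

theorem norm_det_vandermonde_le {B : ℝ} {n : ℕ}
    (h : ∀ j < n, ∃ q : K[X], q.Monic ∧ q.natDegree = j ∧ ∀ z ∈ E, ‖q.eval z‖ ≤ B)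
    {z : Fin n → K} (hz : ∀ i, z i ∈ E) : ‖(vandermonde z).det‖ ≤ n ! * B ^ n := by
  choose! q hmonic hdeg hq using h
  rw [det_eval_matrixOfPolynomials_eq_det_vandermonde z (fun j => q j)
    (fun j => hdeg j j.2) (fun j => hmonic j j.2)]
  have hdet := det_le (abv := NormedField.toAbsoluteValue K)
    (A := of fun i j : Fin n => (q j).eval (z i)) fun i j => hq j j.2 (z i) (hz i)
  rwa [nsmul_eq_mul, Fintype.card_fin] at hdet

theorem exists_pow_le_norm_det_vandermonde {η : ℝ} (hη : 0 ≤ η)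
    (h : ∀ q : K[X], q.Monic → ∃ w ∈ E, η ≤ ‖q.eval w‖) (n : ℕ) :
    ∃ z : Fin n → K, (∀ i, z i ∈ E) ∧ η ^ n ≤ ‖(vandermonde z).det‖ := by
  induction n with
  | zero => exact ⟨Fin.elim0, fun i => i.elim0, by simp⟩
  | succ n ih =>
    obtain ⟨z, hzE, hz⟩ := ih
    obtain ⟨w, hwE, hw⟩ := h (∏ i, (X - C (z i))) (monic_prod_X_sub_C z univ)
    refine ⟨Fin.cons w z, Fin.cases hwE hzE, ?_⟩
    have hdet : ‖(vandermonde (Fin.cons w z : Fin (n + 1) → K)).det‖ =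
        ‖(∏ i, (X - C (z i))).eval w‖ * ‖(vandermonde z).det‖ := by
      rw [det_vandermonde, Fin.prod_univ_succ, Fin.prod_Ioi_zero, det_vandermonde]
      simp [eval_prod, norm_sub_rev w]
    rw [hdet, pow_succ']
    gcongr

theorem norm_prod_roots_eval_comm [IsAlgClosed K] {p q : K[X]} (hp : p.Monic) (hq : q.Monic) :
    ‖(p.roots.map q.eval).prod‖ = ‖(q.roots.map p.eval).prod‖ := by
  have h := congrArg norm (resultant_comm p q p.natDegree q.natDegree)
  rw [resultant_eq_prod_eval p q _ le_rfl (IsAlgClosed.splits p),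
    resultant_eq_prod_eval q p _ le_rfl (IsAlgClosed.splits q)] at h
  simpa [hp, hq] using h

theorem exists_pos_le_norm_eval_of_monic (s : Finset K) :
    ∃ δ > 0, ∀ p : K[X], p.Monic → p.natDegree + 1 = #s → ∃ c ∈ s, δ ≤ ‖p.eval c‖ := by
  classical
  set S : ℝ := ∑ c ∈ s, ‖∏ b ∈ s.erase c, (c - b)‖⁻¹
  have : 0 ≤ S := by positivity
  refine ⟨(S + 1)⁻¹, by positivity, fun p hp hdeg => ?_⟩
  by_contra! hsmall
  have hlagrange : 1 = ∑ c ∈ s, p.eval c / ∏ b ∈ s.erase c, (c - b) := by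
    rw [← hp.leadingCoeff]
    refine Lagrange.leadingCoeff_eq_sum (v := id) Function.injective_id.injOn ?_
    rw [degree_eq_natDegree hp.ne_zero, ← hdeg]
    norm_cast
  have hcontra : (1 : ℝ) ≤ (S + 1)⁻¹ * S := by
    calc (1 : ℝ) = ‖∑ c ∈ s, p.eval c / ∏ b ∈ s.erase c, (c - b)‖ := by
          rw [← hlagrange, norm_one]
      _ ≤ ∑ c ∈ s, ‖p.eval c / ∏ b ∈ s.erase c, (c - b)‖ := norm_sum_le _ _
      _ ≤ ∑ c ∈ s, (S + 1)⁻¹ * ‖∏ b ∈ s.erase c, (c - b)‖⁻¹ := by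
          gcongr with c hc
          rw [norm_div, div_eq_mul_inv]
          gcongr
          exact (hsmall c hc).le
      _ = (S + 1)⁻¹ * S := (mul_sum _ _ _).symm
  rw [inv_mul_eq_div, one_le_div (by positivity)] at hcontra
  linarith

theorem exists_monic_norm_eval_eq_norm_prod_roots [IsAlgClosed K] {p q : K[X]} (hp : p.Monic)
    (hd : p.natDegree ≠ 0) (hq : q.Monic) :
    ∃ N : K[X], N.Monic ∧ N.natDegree = q.natDegree ∧
      ∀ c, ‖N.eval c‖ = ‖((p - C c).roots.map q.eval).prod‖ := by
  refine ⟨((q.roots.map p.eval).map fun a => X - C a).prod,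
    monic_multisetProd_X_sub_C _, ?_, fun c => ?_⟩
  · rw [natDegree_multiset_prod_X_sub_C_eq_card, Multiset.card_map,
      IsAlgClosed.card_roots_eq_natDegree]
  have hpc : (p - C c).Monic := hp.sub_of_left
    (degree_C_le.trans_lt (natDegree_pos_iff_degree_pos.1 (Nat.pos_of_ne_zero hd)))
  rw [norm_prod_roots_eval_comm hpc hq, eval_multiset_prod]
  simp only [← normHom_apply, map_multiset_prod, Multiset.map_map, Function.comp_def]
  simp [norm_sub_rev c]

theorem norm_multiset_prod_le_pow_card {s : Multiset K} {r : ℝ} (h : ∀ x ∈ s, ‖x‖ ≤ r) :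
    ‖s.prod‖ ≤ r ^ Multiset.card s := by
  rw [← normHom_apply, map_multiset_prod]
  exact Multiset.prod_map_le_pow_card (fun x _ => norm_nonneg x) h

theorem exists_mem_le_norm_eval_of_monic [IsAlgClosed K] (hd : 2 ≤ f.natDegree) (hf : f.Monic)
    (hinf : E.Infinite) (hE : ∀ z, f.eval z ∈ E → z ∈ E) {η : ℝ} (hη : η < 1)
    {q : K[X]} (hq : q.Monic) : ∃ w ∈ E, η ≤ ‖q.eval w‖ := by
  by_contra! hsmall
  obtain ⟨w₀, hw₀⟩ := hinf.nonempty
  have hη0 : 0 ≤ η := (norm_nonneg _).trans (hsmall w₀ hw₀).le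
  obtain ⟨s, hsE, hs⟩ := hinf.exists_subset_card_eq (q.natDegree + 1)
  obtain ⟨δ, hδ, hδs⟩ := exists_pos_le_norm_eval_of_monic s
  obtain ⟨k, hk⟩ := exists_pow_lt_of_lt_one hδ hη
  set p := f.comp^[k] X
  have hp : p.Monic := monic_iterate_comp_X hf (by omega) k
  have hpdeg : p.natDegree = f.natDegree ^ k := by simp [p]
  have hpdeg0 : p.natDegree ≠ 0 := hpdeg ▸ pow_ne_zero k (by omega)
  obtain ⟨N, hN, hNdeg, hNeval⟩ := exists_monic_norm_eval_eq_norm_prod_roots hp hpdeg0 hq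
  obtain ⟨c, hcs, hc⟩ := hδs N hN (by rw [hNdeg, hs])
  refine hk.not_ge ?_
  calc δ ≤ ‖((p - C c).roots.map q.eval).prod‖ := hNeval c ▸ hc
    _ ≤ η ^ Multiset.card ((p - C c).roots.map q.eval) := by
        refine norm_multiset_prod_le_pow_card (Multiset.forall_mem_map_iff.2 fun w hw => ?_)
        have hpw : p.eval w = c := by simpa [sub_eq_zero] using isRoot_of_mem_roots hw
        exact (hsmall w (mem_of_eval_iterate_comp_X_mem hE k (hpw ▸ hsE hcs))).le
    _ = η ^ f.natDegree ^ k := by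
        rw [Multiset.card_map, IsAlgClosed.card_roots_eq_natDegree, natDegree_sub_C, hpdeg]
    _ ≤ η ^ k := pow_le_pow_of_le_one hη0 hη.le (Nat.lt_pow_self (by omega)).le

theorem one_le_capSeq [IsAlgClosed K] (hd : 2 ≤ f.natDegree) (hf : f.Monic)
    (hbdd : IsBounded E) (hinf : E.Infinite) (hE : ∀ z, f.eval z ∈ E → z ∈ E)
    {n : ℕ} (hn : n ≠ 0) : 1 ≤ capSeq E n := by
  have hlim : Tendsto (fun η : ℝ => η ^ (2 / ((n : ℝ) - 1))) (𝓝[<] 1) (𝓝 1) := by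
    simpa using (Real.continuousAt_rpow_const 1 _ (Or.inl one_ne_zero)).tendsto.mono_left
      nhdsWithin_le_nhds
  refine le_of_tendsto hlim ?_
  filter_upwards [Ioo_mem_nhdsLT zero_lt_one] with η ⟨hη0, hη1⟩
  obtain ⟨z, hzE, hz⟩ := exists_pow_le_norm_det_vandermonde hη0.le
    (fun q hq => exists_mem_le_norm_eval_of_monic hd hf hinf hE hη1 hq) n
  exact le_capSeq hbdd hη0.le hn hzE hz

theorem norm_pow_le_max_one_pow {z : K} {R : ℝ} (hz : ‖z‖ ≤ R) {m d : ℕ} (hm : m ≤ d) :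
    ‖z ^ m‖ ≤ max 1 R ^ d := by
  calc ‖z ^ m‖ = ‖z‖ ^ m := norm_pow z m
    _ ≤ max 1 R ^ m := by gcongr; exact hz.trans (le_max_right 1 R)
    _ ≤ max 1 R ^ d := pow_le_pow_right₀ (le_max_left 1 R) hm

theorem exists_monic_norm_eval_le (hd : 2 ≤ f.natDegree) (hf : f.Monic)
    (hbdd : IsBounded E) (hE : ∀ z ∈ E, f.eval z ∈ E) :
    ∃ C > 0, ∃ k : ℕ, ∀ n : ℕ, ∃ q : K[X], q.Monic ∧ q.natDegree = n ∧
      ∀ z ∈ E, ‖q.eval z‖ ≤ C * (n + 1) ^ k := by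
  obtain ⟨R, hR⟩ := hbdd.exists_norm_le
  set C := max 1 R ^ f.natDegree
  have hC : 0 < C := by positivity
  obtain ⟨k, hk⟩ := pow_unbounded_of_one_lt C (show (1 : ℝ) < 3 / 2 by norm_num)
  refine ⟨C, hC, k, fun n => ?_⟩
  induction n using Nat.strong_induction_on with
  | _ n ih =>
    rcases lt_or_ge n f.natDegree with hn | hn
    · refine ⟨X ^ n, monic_X_pow n, natDegree_X_pow n, fun z hz => ?_⟩
      rw [eval_pow, eval_X]
      exact (norm_pow_le_max_one_pow (hR z hz) hn.le).trans
        (le_mul_of_one_le_right hC.le (one_le_pow₀ (by simp)))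
    · set m := n / f.natDegree
      have hm : 1 ≤ m := (Nat.one_le_div_iff (by omega)).2 hn
      have hmn : 2 * m ≤ n := (Nat.mul_le_mul_right m hd).trans (Nat.mul_div_le n f.natDegree)
      obtain ⟨q, hqmonic, hqdeg, hq⟩ := ih m (by omega)
      have hqf : (q.comp f).Monic := hqmonic.comp hf (by omega)
      refine ⟨q.comp f * X ^ (n % f.natDegree), hqf.mul (monic_X_pow _), ?_, fun z hz => ?_⟩
      · rw [hqf.natDegree_mul (monic_X_pow _), natDegree_comp, natDegree_X_pow, hqdeg]
        exact Nat.div_add_mod' n _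
      · have hgrowth : (3 / 2 : ℝ) * (m + 1) ≤ n + 1 := by
          have hm' : (1 : ℝ) ≤ m := by exact_mod_cast hm
          have hmn' : (2 : ℝ) * m ≤ n := by exact_mod_cast hmn
          linarith
        calc ‖(q.comp f * X ^ (n % f.natDegree)).eval z‖
            = ‖q.eval (f.eval z)‖ * ‖z ^ (n % f.natDegree)‖ := by
              rw [eval_mul, eval_comp, norm_mul, eval_pow, eval_X]
          _ ≤ C * (m + 1) ^ k * (3 / 2) ^ k := by
              gcongr
              · exact hq _ (hE z hz)
              · exact (norm_pow_le_max_one_pow (hR z hz) (Nat.mod_lt n (by omega)).le).trans hk.le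
          _ = C * (3 / 2 * (m + 1)) ^ k := by rw [mul_pow]; ring
          _ ≤ C * (n + 1) ^ k := by gcongr

theorem exists_capSeq_le (hd : 2 ≤ f.natDegree) (hf : f.Monic)
    (hbdd : IsBounded E) (hE : ∀ z ∈ E, f.eval z ∈ E) :
    ∃ C > 0, ∃ k : ℕ, ∀ n ≠ 0, capSeq E n ≤ (C * (n : ℝ) ^ k) ^ (2 / ((n : ℝ) - 1)) := by
  obtain ⟨C, hC, k, h⟩ := exists_monic_norm_eval_le hd hf hbdd hE
  refine ⟨C, hC, k + 1, fun n hn => capSeq_le (by positivity) hn fun z hz => ?_⟩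
  have hq : ∀ j < n, ∃ q : K[X], q.Monic ∧ q.natDegree = j ∧
      ∀ z ∈ E, ‖q.eval z‖ ≤ C * (n : ℝ) ^ k := fun j hj => by
    obtain ⟨q, hmonic, hdeg, hq⟩ := h j
    refine ⟨q, hmonic, hdeg, fun z hz => (hq z hz).trans ?_⟩
    gcongr
    exact_mod_cast hj
  calc ‖(vandermonde z).det‖ ≤ n ! * (C * (n : ℝ) ^ k) ^ n := norm_det_vandermonde_le hq hz
    _ ≤ (n : ℝ) ^ n * (C * (n : ℝ) ^ k) ^ n := by
        gcongr
        exact_mod_cast n.factorial_le_pow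
    _ = (C * (n : ℝ) ^ (k + 1)) ^ n := by rw [← mul_pow]; ring

theorem tendsto_const_mul_pow_rpow_two_div {C : ℝ} (hC : 0 < C) (k : ℕ) :
    Tendsto (fun n : ℕ => (C * (n : ℝ) ^ k) ^ (2 / ((n : ℝ) - 1))) atTop (𝓝 1) := by
  have hexp : Tendsto (fun n : ℕ => 2 / ((n : ℝ) - 1)) atTop (𝓝 0) :=
    (tendsto_atTop_add_const_right _ (-1) tendsto_natCast_atTop_atTop).const_div_atTop 2
  have hconst : Tendsto (fun n : ℕ => C ^ (2 / ((n : ℝ) - 1))) atTop (𝓝 1) := by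
    simpa using tendsto_const_nhds.rpow hexp (Or.inl hC.ne')
  have hpow : Tendsto (fun n : ℕ => (n : ℝ) ^ (k * 2 / (1 * (n : ℝ) + -1))) atTop (𝓝 1) :=
    (tendsto_rpow_div_mul_add (k * 2) 1 (-1) zero_ne_one).comp tendsto_natCast_atTop_atTop
  rw [← one_mul (1 : ℝ)]
  refine (hconst.mul hpow).congr fun n => ?_
  rw [Real.mul_rpow hC.le (by positivity), ← Real.rpow_natCast, ← Real.rpow_mul (by positivity)]
  ring_nf

theorem tendsto_capSeq_of_eval_mem_iff [IsAlgClosed K] (hd : 2 ≤ f.natDegree) (hf : f.Monic)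
    (hbdd : IsBounded E) (hinf : E.Infinite) (hE : ∀ z, f.eval z ∈ E ↔ z ∈ E) :
    Tendsto (capSeq E) atTop (𝓝 1) := by
  obtain ⟨C, hC, k, hupper⟩ := exists_capSeq_le hd hf hbdd fun z hz => (hE z).2 hz
  refine tendsto_of_tendsto_of_tendsto_of_le_of_le' tendsto_const_nhds
    (tendsto_const_mul_pow_rpow_two_div hC k) ?_ ((eventually_ne_atTop 0).mono hupper)
  filter_upwards [eventually_ne_atTop 0] with n hn
  exact one_le_capSeq hd hf hbdd hinf (fun z => (hE z).1) hn

/-- The filled Julia set `𝒦_v` of `f`: the points with bounded orbit under `f`. -/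
def filledJulia (f : K[X]) : Set K :=
  {z | ∃ M : ℝ, ∀ m : ℕ, ‖(fun w => f.eval w)^[m] z‖ ≤ M}

theorem eval_mem_filledJulia_iff {z : K} : f.eval z ∈ filledJulia f ↔ z ∈ filledJulia f := by
  constructor
  · rintro ⟨M, hM⟩
    refine ⟨max ‖z‖ M, fun m => ?_⟩
    cases m with
    | zero => exact le_max_left _ _
    | succ m => exact (hM m).trans (le_max_right _ _)
  · rintro ⟨M, hM⟩
    exact ⟨M, fun m => hM (m + 1)⟩

theorem eventually_two_mul_norm_le_norm_eval (hd : 2 ≤ f.natDegree) :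
    ∀ᶠ z in cobounded K, 2 * ‖z‖ ≤ ‖f.eval z‖ := by
  have hdivX : 0 < f.divX.degree := by
    rw [← natDegree_pos_iff_degree_pos, natDegree_divX_eq_natDegree_tsub_one]
    omega
  have hlarge : Tendsto (fun z => ‖f.divX.eval z‖) (cobounded K) atTop :=
    f.divX.tendsto_norm_atTop hdivX tendsto_norm_cobounded_atTop
  filter_upwards [hlarge.eventually_ge_atTop 3,
    tendsto_norm_cobounded_atTop.eventually_ge_atTop ‖f.coeff 0‖] with z hz hz0
  have hdecomp : f.eval z = f.divX.eval z * z + f.coeff 0 := by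
    conv_lhs => rw [← f.divX_mul_X_add]
    simp
  calc 2 * ‖z‖ ≤ 3 * ‖z‖ - ‖f.coeff 0‖ := by linarith
    _ ≤ ‖f.divX.eval z * z‖ - ‖f.coeff 0‖ := by rw [norm_mul]; gcongr
    _ ≤ ‖f.eval z‖ := hdecomp ▸ norm_sub_le_norm_add _ _

theorem isBounded_filledJulia (hd : 2 ≤ f.natDegree) : IsBounded (filledJulia f) := by
  obtain ⟨R, -, hR⟩ := hasBasis_cobounded_norm.eventually_iff.1
    (eventually_two_mul_norm_le_norm_eval hd)
  refine isBounded_iff_forall_norm_le.2 ⟨max R 1, ?_⟩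
  rintro z ⟨M, hM⟩
  by_contra! hz
  obtain ⟨hzR, hz1⟩ := max_lt_iff.1 hz
  have hgrow : ∀ m : ℕ, 2 ^ m * ‖z‖ ≤ ‖(fun w => f.eval w)^[m] z‖ := by
    intro m
    induction m with
    | zero => simp
    | succ m ih =>
      have hz_le : ‖z‖ ≤ ‖(fun w => f.eval w)^[m] z‖ :=
        (le_mul_of_one_le_left (norm_nonneg z) (one_le_pow₀ one_le_two)).trans ih
      rw [Function.iterate_succ_apply', pow_succ', mul_assoc]
      exact (mul_le_mul_of_nonneg_left ih zero_le_two).trans (hR (hzR.le.trans hz_le))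
  obtain ⟨m, hm⟩ := pow_unbounded_of_one_lt M (one_lt_two : (1 : ℝ) < 2)
  have hpow_le : (2 : ℝ) ^ m ≤ 2 ^ m * ‖z‖ := le_mul_of_one_le_right (by positivity) hz1.le
  linarith [hgrow m, hM m]

theorem infinite_closedBall [Infinite K] (x : K) {r : ℝ} (hr : 1 ≤ r) :
    (Metric.closedBall x r).Infinite := by
  obtain _ | ⟨⟨h, rfl⟩⟩ := NormedField.discreteTopology_or_nontriviallyNormedField K
  · have huniv : Metric.closedBall x r = Set.univ := Set.eq_univ_of_forall fun z => by
      rw [mem_closedBall_iff_norm]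
      rcases eq_or_ne (z - x) 0 with h | h
      · rw [h, norm_zero]
        linarith
      · exact (NormedDivisionRing.norm_eq_one_iff_ne_zero_of_discrete.2 h).trans_le hr
    exact huniv ▸ Set.infinite_univ
  · exact infinite_of_mem_nhds x (Metric.closedBall_mem_nhds x (by linarith))

theorem closedBall_subset_filledJulia {x : K} {d : ℕ}
    (h : ∀ z, f.eval z - x = (z - x) ^ d) : Metric.closedBall x 1 ⊆ filledJulia f := by
  intro z hz
  have hmaps : Set.MapsTo (fun w => f.eval w) (Metric.closedBall x 1) (Metric.closedBall x 1) := by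
    intro w hw
    rw [mem_closedBall_iff_norm] at hw ⊢
    rw [h, norm_pow]
    exact pow_le_one₀ (norm_nonneg _) hw
  obtain ⟨M, hM⟩ := Metric.isBounded_closedBall.exists_norm_le (s := Metric.closedBall x 1)
  exact ⟨M, fun m => hM _ (hmaps.iterate m hz)⟩

theorem infinite_filledJulia [IsAlgClosed K] (hd : 2 ≤ f.natDegree) (hf : f.Monic) :
    (filledJulia f).Infinite := by
  obtain ⟨x, hfix⟩ := exists_eval_eq_self hd
  have hx : x ∈ filledJulia f := ⟨‖x‖, fun m => (congrArg norm (Function.iterate_fixed hfix m)).le⟩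
  intro hfin
  have hpow : ∀ z, f.eval z - x = (z - x) ^ f.natDegree :=
    eval_sub_eq_pow_of_finite (by omega) hf hfin (fun _ => eval_mem_filledJulia_iff) hx hfix
  exact infinite_closedBall x le_rfl (hfin.subset (closedBall_subset_filledJulia hpow))

theorem stmt11_general [IsAlgClosed K] (hd : 2 ≤ f.natDegree) (hf : f.Monic) :
    Tendsto (capSeq (filledJulia f)) atTop (𝓝 1) :=
  tendsto_capSeq_of_eval_mem_iff hd hf (isBounded_filledJulia hd) (infinite_filledJulia hd hf)
    fun _ => eval_mem_filledJulia_iff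

end NormedField

/-- For a monic polynomial `f` of degree `d ≥ 2` over a complete algebraically closed
non-archimedean field, the filled Julia set
`𝒦_v = {z : the orbit (f^n(z)) is bounded}` has capacity `1`:
the sequence defining `γ_v(𝒦_v)` converges to `1` (i.e. `log γ_v(𝒦_v) = 0`). -/
theorem stmt11 (Cv : Type*) [NormedField Cv] [CompleteSpace Cv] [IsAlgClosed Cv]
    [IsUltrametricDist Cv] (hnt : ∃ x : Cv, 1 < ‖x‖)
    (f : Polynomial Cv) (d : ℕ) (hd : 2 ≤ d) (hdeg : f.natDegree = d) (hmonic : f.Monic) :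
    Tendsto
      (fun n : ℕ =>
        capSeq {z : Cv | ∃ M : ℝ, ∀ m : ℕ, ‖(fun w => f.eval w)^[m] z‖ ≤ M} n)
      atTop (nhds 1) := by
  exact stmt11_general (hdeg.symm ▸ hd) hmonic
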